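/- Let f be an even log-concave probability density on ℝ^d, let X, Y be independent random vectors with density f, and let h be the density of (X+Y)/√2, so that h(x) = 2^{d/2}·∫_{ℝ^d} f(x−y)f(y) dy. Then h(0) = 2^{d/2}·∫_{ℝ^d} f(y)² dy ≥ 2^{−d/2}·f(0). -/

import Mathlib

open MeasureTheory Real

def IsDensity {d : ℕ} (f : EuclideanSpace ℝ (Fin d) → ℝ) : Prop :=
  (∀ x, 0 ≤ f x) ∧ Measurable f ∧ (∫ x, f x) = 1

def LogConcave {d : ℕ} (f : EuclideanSpace ℝ (Fin d) → ℝ) : Prop :=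
  ConvexOn ℝ Set.univ (fun x => -Real.log (f x))

lemma polar_lintegral {E : Type*} [NormedAddCommGroup E] [NormedSpace ℝ E] [MeasurableSpace E]
    [BorelSpace E] [FiniteDimensional ℝ E] [Nontrivial E] (μ : Measure E) [μ.IsAddHaarMeasure]
    (F : E → ENNReal) (hF : Measurable F) :
    ∫⁻ x, F x ∂μ = ∫⁻ θ : Metric.sphere (0 : E) 1, ∫⁻ r in Set.Ioi (0:ℝ),
      ENNReal.ofReal (r ^ (Module.finrank ℝ E - 1)) * F (r • (θ : E)) ∂volume ∂μ.toSphere := by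
  have hmp := μ.measurePreserving_homeomorphUnitSphereProd
  have hG : Measurable (fun p : Metric.sphere (0 : E) 1 × Set.Ioi (0:ℝ) =>
      F ((p.2 : ℝ) • (p.1 : E))) := by
    apply hF.comp
    exact (measurable_subtype_coe.comp measurable_snd).smul
      (measurable_subtype_coe.comp measurable_fst)
  have h1 : ∫⁻ x, F x ∂μ = ∫⁻ x : ({(0 : E)}ᶜ : Set E), F x ∂(μ.comap (↑)) := by
    rw [lintegral_subtype_comap (measurableSet_singleton _).compl F,
      MeasureTheory.restrict_compl_singleton]
  have h2 : ∫⁻ x : ({(0 : E)}ᶜ : Set E), F x ∂(μ.comap (↑)) =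
      ∫⁻ p, F ((p.2 : ℝ) • (p.1 : E))
        ∂(μ.toSphere.prod (Measure.volumeIoiPow (Module.finrank ℝ E - 1))) := by
    rw [← hmp.lintegral_comp hG]
    refine lintegral_congr fun x => ?_
    congr 1
    have hx : ‖(x : E)‖ ≠ 0 := norm_ne_zero_iff.2 x.2
    simp [smul_smul, hx]
  rw [h1, h2, lintegral_prod _ hG.aemeasurable]
  refine lintegral_congr fun θ => ?_
  have hm : Measurable fun r : ℝ => F (r • (θ : E)) :=
    hF.comp (measurable_id.smul_const _)
  have hw : Measurable fun r : Set.Ioi (0:ℝ) =>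
      ENNReal.ofReal ((r : ℝ) ^ (Module.finrank ℝ E - 1)) := by fun_prop
  rw [Measure.volumeIoiPow]
  refine (lintegral_withDensity_eq_lintegral_mul _ hw (hm.comp measurable_subtype_coe)).trans ?_
  exact lintegral_subtype_comap measurableSet_Ioi
    (fun r : ℝ => ENNReal.ofReal (r ^ (Module.finrank ℝ E - 1)) * F (r • (θ : E)))

lemma half_subst (k : ℝ) (F : ℝ → ENNReal) :
    ∫⁻ r in Set.Ioi k, F r =
      ∫⁻ r in Set.Ioi k, ENNReal.ofReal (1/2) * F ((k + r) / 2) := by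
  have him : (fun r : ℝ => (k + r) / 2) '' Set.Ioi k = Set.Ioi k := by
    ext x
    constructor
    · rintro ⟨r, hr, rfl⟩
      simp only [Set.mem_Ioi] at *
      linarith
    · intro hx
      refine ⟨2 * x - k, ?_, ?_⟩
      · simp only [Set.mem_Ioi] at *
        linarith
      · simp
  have := lintegral_image_eq_lintegral_abs_deriv_mul (s := Set.Ioi k)
    (f := fun r : ℝ => (k + r) / 2) (f' := fun _ => 1/2) measurableSet_Ioi
    (fun x _ => by
      simpa using (((hasDerivAt_id x).const_add k).div_const 2).hasDerivWithinAt)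
    (fun a _ b _ h => by simpa using h) F
  rw [him] at this
  rw [this]
  norm_num

lemma ray_ineq (n : ℕ) (u : ℝ → ℝ) (h0 : ∀ r, 0 ≤ u r)
    (hc : ConvexOn ℝ Set.univ (fun r => -Real.log (u r))) (hev : ∀ r, u (-r) = u r)
    (hpos : 0 < u 0) :
    ∫⁻ r in Set.Ioi (0:ℝ), ENNReal.ofReal (r ^ n) * ENNReal.ofReal ((1/2)^(n+1) * u 0 * u r) ≤
      ∫⁻ r in Set.Ioi (0:ℝ), ENNReal.ofReal (r ^ n) * ENNReal.ofReal (u r ^ 2) := by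
  set φ : ℝ → ℝ := fun r => -Real.log (u r) with hφ
  have hcont : Continuous φ := continuousOn_univ.1 (hc.continuousOn isOpen_univ)
  have hφev : ∀ r, φ (-r) = φ r := fun r => by simp [hφ, hev]
  have hmin : ∀ r, φ 0 ≤ φ r := by
    intro r
    have := hc.2 (Set.mem_univ r) (Set.mem_univ (-r))
      (show (0:ℝ) ≤ 1/2 by norm_num) (show (0:ℝ) ≤ 1/2 by norm_num) (by norm_num)
    simp only [smul_eq_mul, hφev] at this
    have e : (1/2 : ℝ) * r + 1/2 * -r = 0 := by ring
    rw [e] at this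
    linarith
  have hmid : ∀ a b, φ ((a + b) / 2) ≤ (φ a + φ b) / 2 := by
    intro a b
    have := hc.2 (Set.mem_univ a) (Set.mem_univ b)
      (show (0:ℝ) ≤ 1/2 by norm_num) (show (0:ℝ) ≤ 1/2 by norm_num) (by norm_num)
    simp only [smul_eq_mul] at this
    have e : (1/2 : ℝ) * a + 1/2 * b = (a + b) / 2 := by ring
    rw [e] at this
    linarith
  -- convexity from the origin
  have hray : ∀ r s, 0 < r → r < s → s * (φ r - φ 0) ≤ r * (φ s - φ 0) := by
    intro r s hr hrs
    have hs : 0 < s := hr.trans hrs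
    have hle : r / s ≤ 1 := (div_le_one hs).2 hrs.le
    have := hc.2 (Set.mem_univ (0:ℝ)) (Set.mem_univ s)
      (show 0 ≤ 1 - r/s by linarith) (show 0 ≤ r/s by positivity) (by ring)
    simp only [smul_eq_mul, mul_zero, zero_add] at this
    rw [div_mul_cancel₀ _ hs.ne'] at this
    have h2 : φ r - φ 0 ≤ r / s * (φ s - φ 0) := by
      have : φ r ≤ (1 - r/s) * φ 0 + r/s * φ s := this
      linarith
    calc s * (φ r - φ 0) ≤ s * (r / s * (φ s - φ 0)) := by gcongr
      _ = r * (φ s - φ 0) := by field_simp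
  have hstrict : ∀ r s, 0 < r → r < s → φ 0 < φ r → φ r < φ s := by
    intro r s hr hrs h
    have h1 := hray r s hr hrs
    nlinarith
  have hpow : (1/2 : ℝ)^(n+1) ≤ 1 := pow_le_one₀ (by norm_num) (by norm_num)
  have hA : ∀ r, φ r = φ 0 → (1/2)^(n+1) * u 0 * u r ≤ u r ^ 2 := by
    intro r hr
    rcases (h0 r).eq_or_lt with h | h
    · simp [← h]
    · have : u r = u 0 := Real.log_injOn_pos h hpos (by simpa [hφ] using hr)
      rw [this]
      nlinarith [mul_pos hpos hpos]
  by_cases hall : ∀ r, 0 < r → φ r = φ 0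
  · refine setLIntegral_mono' measurableSet_Ioi fun r hr => ?_
    gcongr
    exact hA r (hall r hr)
  push Not at hall
  obtain ⟨R, hR, hRne⟩ := hall
  have hRlt : φ 0 < φ R := lt_of_le_of_ne (hmin R) (Ne.symm hRne)
  set S : Set ℝ := {r | 0 ≤ r ∧ φ r = φ 0} with hS
  have hSc : IsClosed S := isClosed_Ici.inter (isClosed_eq hcont continuous_const)
  have hSb : BddAbove S := ⟨R, fun r hr => by
    by_contra hlt
    push Not at hlt
    have := hstrict R r hR hlt hRlt
    rw [hr.2] at this
    linarith⟩
  have hSn : S.Nonempty := ⟨0, le_rfl, rfl⟩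
  set k := sSup S with hk
  have hkS : k ∈ S := hSc.csSup_mem hSn hSb
  have hk0 : 0 ≤ k := hkS.1
  have hin : ∀ r, 0 < r → r ≤ k → φ r = φ 0 := by
    intro r hr hrk
    by_contra hne
    have hlt := lt_of_le_of_ne (hmin r) (Ne.symm hne)
    rcases hrk.eq_or_lt with h | h
    · rw [h] at hne; exact hne hkS.2
    · have := hstrict r k hr h hlt
      rw [hkS.2] at this
      linarith
  have hout : ∀ r, k < r → φ 0 < φ r := by
    intro r hr
    refine lt_of_le_of_ne (hmin r) fun h => ?_
    exact absurd (le_csSup hSb (show r ∈ S from ⟨hk0.trans hr.le, h.symm⟩)) (not_le.2 hr)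
  have hsplit : Set.Ioi (0:ℝ) = Set.Ioc 0 k ∪ Set.Ioi k := (Set.Ioc_union_Ioi_eq_Ioi hk0).symm
  have hdisj : Disjoint (Set.Ioc (0:ℝ) k) (Set.Ioi k) := Set.Ioc_disjoint_Ioi le_rfl
  rw [hsplit, lintegral_union measurableSet_Ioi hdisj, lintegral_union measurableSet_Ioi hdisj]
  refine add_le_add ?_ ?_
  · refine setLIntegral_mono' measurableSet_Ioc fun r hr => ?_
    gcongr
    exact hA r (hin r hr.1 hr.2)
  rw [half_subst k (fun r => ENNReal.ofReal (r ^ n) * ENNReal.ofReal (u r ^ 2))]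
  have hsub : ({r | k < r ∧ u ((k + r) / 2) = 0} : Set ℝ).Subsingleton := by
    have key : ∀ a b, k < a → u ((k + a) / 2) = 0 → u ((k + b) / 2) = 0 → ¬ a < b := by
      intro a b ha hua hub hab
      have h1 := hstrict ((k + a) / 2) ((k + b) / 2) (by linarith) (by linarith)
        (hout _ (by linarith))
      simp [hφ, hua, hub] at h1
    rintro a ⟨ha, hua⟩ b ⟨hb, hub⟩
    exact le_antisymm (not_lt.1 (key b a hb hub hua)) (not_lt.1 (key a b ha hua hub))
  have hae : ∀ᵐ r : ℝ, r ∉ ({r | k < r ∧ u ((k + r) / 2) = 0} : Set ℝ) :=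
    measure_eq_zero_iff_ae_notMem.1 (hsub.measure_zero _)
  refine lintegral_mono_ae ?_
  filter_upwards [ae_restrict_of_ae hae, ae_restrict_mem measurableSet_Ioi] with r hr hkr
  have hkr' : k < r := hkr
  have hr0 : 0 < r := hk0.trans_lt hkr'
  have hu : 0 < u ((k + r) / 2) :=
    lt_of_le_of_ne (h0 _) fun h => hr ⟨hkr', h.symm⟩
  have hmain : u 0 * u r ≤ u ((k + r) / 2) ^ 2 := by
    rcases (h0 r).eq_or_lt with h | h
    · rw [← h]; simp; positivity
    · rw [← Real.log_le_log_iff (by positivity) (by positivity), Real.log_mul hpos.ne' h.ne',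
        Real.log_pow]
      have h1 := hmid k r
      rw [hkS.2] at h1
      simp only [hφ] at h1
      push_cast
      linarith
  have hp : (r / 2) ^ n ≤ ((k + r) / 2) ^ n := by
    gcongr
    linarith
  rw [← ENNReal.ofReal_mul (by positivity), ← ENNReal.ofReal_mul (by positivity),
    ← ENNReal.ofReal_mul (by positivity)]
  apply ENNReal.ofReal_le_ofReal
  have hur := h0 r
  calc r ^ n * ((1/2)^(n+1) * u 0 * u r) = 1/2 * ((r/2)^n * (u 0 * u r)) := by
        rw [div_pow, div_pow, pow_succ, one_pow]; field_simp; ring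
    _ ≤ 1/2 * (((k + r) / 2) ^ n * u ((k + r) / 2) ^ 2) := by gcongr

/-- For an even log-concave density `f` on `ℝ^d`, the density
`h(x) = 2^{d/2} ∫ f(x-y) f(y) dy` of `(X+Y)/√2` satisfies
`h(0) = 2^{d/2} ∫ f² ≥ 2^{-d/2} f(0)`. -/
theorem self_convolution_at_zero_ge {d : ℕ}
    (f : EuclideanSpace ℝ (Fin d) → ℝ)
    (hf : IsDensity f) (hlc : LogConcave f)
    (heven : ∀ x, f (-x) = f x)
    (h : EuclideanSpace ℝ (Fin d) → ℝ)
    (hh : ∀ x, h x = (2:ℝ) ^ ((d:ℝ) / 2) * ∫ y, f (x - y) * f y) :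
    h 0 = (2:ℝ) ^ ((d:ℝ) / 2) * (∫ y, f y ^ 2) ∧
      (2:ℝ) ^ (-(d:ℝ) / 2) * f 0 ≤ h 0 := by
  obtain ⟨hnn, hmeas, hint⟩ := hf
  have e0 : h 0 = (2:ℝ) ^ ((d:ℝ) / 2) * (∫ y, f y ^ 2) := by
    rw [hh]
    congr 1
    refine integral_congr_ae (Filter.Eventually.of_forall fun y => ?_)
    simp [heven, sq]
  refine ⟨e0, ?_⟩
  suffices hmain : (1/2 : ℝ) ^ d * f 0 ≤ ∫ y, f y ^ 2 by
    rw [e0]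
    have hp : (2:ℝ) ^ (-(d:ℝ) / 2) = (2:ℝ) ^ ((d:ℝ) / 2) * (1/2 : ℝ) ^ d := by
      rw [one_div, inv_pow, ← Real.rpow_natCast, ← Real.rpow_neg (by norm_num),
        ← Real.rpow_add (by norm_num)]
      congr 1
      ring
    rw [hp, mul_assoc]
    gcongr
  rcases (hnn 0).eq_or_lt with hz | hpos
  · rw [← hz, mul_zero]
    exact integral_nonneg fun y => sq_nonneg _
  rcases Nat.eq_zero_or_pos d with rfl | hd
  · have : ∀ y, f y ^ 2 = f 0 * f y := fun y => by
      rw [Subsingleton.elim y 0, sq]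
    simp_rw [this]
    rw [integral_const_mul, hint]
    simp
  have hfi : Integrable f := by
    by_contra hni
    rw [integral_undef hni] at hint
    norm_num at hint
  have hbd : ∀ y, f y ≤ f 0 := by
    intro y
    rcases (hnn y).eq_or_lt with h | h
    · rw [← h]; exact hpos.le
    · have := hlc.2 (Set.mem_univ y) (Set.mem_univ (-y))
        (show (0:ℝ) ≤ 1/2 by norm_num) (show (0:ℝ) ≤ 1/2 by norm_num) (by norm_num)
      simp only [smul_eq_mul, heven, smul_neg, add_neg_cancel] at this
      exact (Real.log_le_log_iff h hpos).1 (by linarith)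
  have hsqi : Integrable (fun y => f y ^ 2) := by
    refine (hfi.const_mul (f 0)).mono' (hmeas.pow_const 2).aestronglyMeasurable
      (Filter.Eventually.of_forall fun y => ?_)
    rw [Real.norm_of_nonneg (sq_nonneg _), sq]
    exact mul_le_mul_of_nonneg_right (hbd y) (hnn y)
  have hlhs : (1/2 : ℝ) ^ d * f 0 = ∫ y, (1/2 : ℝ) ^ d * f 0 * f y := by
    rw [integral_const_mul, hint, mul_one]
  rw [hlhs, ← ENNReal.ofReal_le_ofReal_iff (integral_nonneg fun y => sq_nonneg _),
    ofReal_integral_eq_lintegral_ofReal (hfi.const_mul _)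
      (Filter.Eventually.of_forall fun y => mul_nonneg (by positivity) (hnn y)),
    ofReal_integral_eq_lintegral_ofReal hsqi (Filter.Eventually.of_forall fun y => sq_nonneg _)]
  obtain ⟨n, rfl⟩ : ∃ n, d = n + 1 := ⟨d - 1, by omega⟩
  rw [polar_lintegral volume _ (hmeas.const_mul _).ennreal_ofReal,
    polar_lintegral volume _ (hmeas.pow_const 2).ennreal_ofReal]
  refine lintegral_mono fun θ => ?_
  have hfr : Module.finrank ℝ (EuclideanSpace ℝ (Fin (n+1))) - 1 = n := by simp
  rw [hfr]
  have hcu : ConvexOn ℝ Set.univ (fun r : ℝ => -Real.log (f (r • (θ : EuclideanSpace ℝ (Fin (n+1)))))) := by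
    have := hlc.comp_linearMap
      (LinearMap.toSpanSingleton ℝ (EuclideanSpace ℝ (Fin (n+1))) θ)
    simpa [Function.comp_def] using this
  have := ray_ineq n (fun r => f (r • (θ : EuclideanSpace ℝ (Fin (n+1)))))
    (fun r => hnn _) hcu (fun r => by simp [heven]) (by simpa using hpos)
  simpa using this
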